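/- For every i ∈ {1,…,d} and every h ∈ {0,…,i−1}, one has (Σ_{j=0}^h E_i* A_j E_i*)² = (Σ_{j=0}^h k_j)(Σ_{j=0}^h E_i* A_j E_i*). -/

import Mathlib

open Finset Matrix

/-- Vertex set of the wreath product `K_{n 0} ≀ K_{n 1} ≀ ⋯ ≀ K_{n (d-1)}`
(paper indices `n_1, …, n_d` correspond to `n 0, …, n (d-1)`). -/
abbrev Vx (d : ℕ) (n : ℕ → ℕ) : Type := (i : Fin d) → Fin (n i)

/-- `delta x y = 0` if `x = y`; otherwise `delta x y` is the largest (1-based)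
index at which `x` and `y` differ. -/
def delta {d : ℕ} {n : ℕ → ℕ} (x y : Vx d n) : ℕ :=
  (Finset.univ.filter fun i => x i ≠ y i).sup fun i => (i : ℕ) + 1

/-- The `i`-th adjacency matrix of the wreath product: `(A i) x y = 1` iff `delta x y = i`. -/
noncomputable def A (d : ℕ) (n : ℕ → ℕ) (i : ℕ) : Matrix (Vx d n) (Vx d n) ℂ :=
  Matrix.of fun x y => if delta x y = i then 1 else 0

/-- The valencies: `k 0 = 1` and, for `1 ≤ i`, `k i = n_1 ⋯ n_{i-1} (n_i - 1)`,
i.e. `k i = n 0 ⋯ n (i-2) * (n (i-1) - 1)`. -/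
def k (n : ℕ → ℕ) (i : ℕ) : ℕ :=
  if i = 0 then 1 else (∏ j ∈ Finset.range (i - 1), n j) * (n (i - 1) - 1)

/-- The dual idempotent `E_i*` with respect to the base point `x₀`: the diagonal
0-1 matrix with `(E_i*)_{yy} = 1` iff `delta x₀ y = i`. -/
noncomputable def Es {d : ℕ} {n : ℕ → ℕ} (x₀ : Vx d n) (i : ℕ) :
    Matrix (Vx d n) (Vx d n) ℂ :=
  Matrix.of fun y z => if y = z ∧ delta x₀ y = i then 1 else 0

/-- The all-ones matrix `J`. -/
noncomputable def Jm (d : ℕ) (n : ℕ → ℕ) : Matrix (Vx d n) (Vx d n) ℂ :=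
  Matrix.of fun _ _ => 1

/-- The matrices `G i j`. -/
noncomputable def G {d : ℕ} {n : ℕ → ℕ} (x₀ : Vx d n) (i j : ℕ) :
    Matrix (Vx d n) (Vx d n) ℂ :=
  if i < j then ((k n j : ℂ))⁻¹ • (Es x₀ i * A d n j * Es x₀ j)
  else if j < i then ((k n j : ℂ))⁻¹ • (Es x₀ i * A d n i * Es x₀ j)
  else ((k n i : ℂ))⁻¹ • (Es x₀ i * Jm d n * Es x₀ i)

/-- The span `U` of the matrices `G i j`, `i, j ∈ [d]`. -/
noncomputable def Uspan {d : ℕ} {n : ℕ → ℕ} (x₀ : Vx d n) :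
    Submodule ℂ (Matrix (Vx d n) (Vx d n) ℂ) :=
  Submodule.span ℂ (Set.range fun p : Fin (d + 1) × Fin (d + 1) => G x₀ p.1 p.2)

/-- The Terwilliger algebra of the wreath product with respect to `x₀`. -/
noncomputable def Ter {d : ℕ} {n : ℕ → ℕ} (x₀ : Vx d n) :
    Subalgebra ℂ (Matrix (Vx d n) (Vx d n) ℂ) :=
  Algebra.adjoin ℂ
    ((Set.range fun i : Fin (d + 1) => A d n i) ∪ (Set.range fun i : Fin (d + 1) => Es x₀ i))

/-- The matrices `F i h`, for `1 ≤ i ≤ d` and `0 ≤ h ≤ i - 1`. -/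
noncomputable def F {d : ℕ} {n : ℕ → ℕ} (x₀ : Vx d n) (i h : ℕ) :
    Matrix (Vx d n) (Vx d n) ℂ :=
  if h < i - 1 then
    (∑ j ∈ Finset.range (h + 1), (k n j : ℂ))⁻¹ •
        (∑ j ∈ Finset.range (h + 1), Es x₀ i * A d n j * Es x₀ i)
      - (∑ j ∈ Finset.range (h + 2), (k n j : ℂ))⁻¹ •
          (∑ j ∈ Finset.range (h + 2), Es x₀ i * A d n j * Es x₀ i)
  else
    (∑ j ∈ Finset.range i, (k n j : ℂ))⁻¹ •
        (∑ j ∈ Finset.range i, Es x₀ i * A d n j * Es x₀ i)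
      - G x₀ i i

lemma delta_le_iff {d : ℕ} {n : ℕ → ℕ} (x y : Vx d n) (h : ℕ) :
    delta x y ≤ h ↔ ∀ i : Fin d, h ≤ (i : ℕ) → x i = y i := by
  unfold delta
  rw [Finset.sup_le_iff]
  constructor
  · intro H i hi
    by_contra hne
    have := H i (by simp [hne])
    omega
  · intro H i hi
    by_contra hlt
    simp only [Finset.mem_filter, Finset.mem_univ, true_and] at hi
    exact hi (H i (by omega))

lemma delta_symm {d : ℕ} {n : ℕ → ℕ} (x y : Vx d n) : delta x y = delta y x := by
  unfold delta
  congr 1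
  ext i
  simp [ne_comm]

lemma delta_tri {d : ℕ} {n : ℕ → ℕ} {x y z : Vx d n} {h : ℕ}
    (h1 : delta x y ≤ h) (h2 : delta y z ≤ h) : delta x z ≤ h := by
  rw [delta_le_iff] at *
  intro i hi
  rw [h1 i hi, h2 i hi]

lemma delta_eq_of {d : ℕ} {n : ℕ → ℕ} {x y z : Vx d n} {h i : ℕ}
    (h1 : delta x y = i) (h2 : delta y z ≤ h) (hi : h < i) : delta x z = i := by
  apply le_antisymm
  · exact delta_tri h1.le (h2.trans hi.le)
  · by_contra hc
    have h3 : delta x z ≤ i - 1 := by omega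
    have h4 : delta z y ≤ i - 1 := by rw [delta_symm]; omega
    have := delta_tri h3 h4
    omega

lemma card_ball {d : ℕ} {n : ℕ → ℕ} (y : Vx d n) (h : ℕ) (hd : h ≤ d) :
    (Finset.univ.filter fun w : Vx d n => delta y w ≤ h).card = ∏ j ∈ Finset.range h, n j := by
  have : (Finset.univ.filter fun w : Vx d n => delta y w ≤ h) =
      Fintype.piFinset (fun i : Fin d => if (i : ℕ) < h then Finset.univ else {y i}) := by
    ext w
    simp only [Finset.mem_filter, Finset.mem_univ, true_and, delta_le_iff, Fintype.mem_piFinset]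
    refine forall_congr' fun i => ?_
    by_cases hi : (i : ℕ) < h
    · simp [hi]
    · simp [hi, not_lt.mp hi, eq_comm]
  rw [this, Fintype.card_piFinset]
  have h2 : ∀ i : Fin d, (if (i : ℕ) < h then (Finset.univ : Finset (Fin (n i))) else {y i}).card
      = (fun j : ℕ => if j < h then n j else 1) i := by
    intro i
    by_cases hi : (i : ℕ) < h <;> simp [hi]
  rw [Finset.prod_congr rfl fun i _ => h2 i,
    Fin.prod_univ_eq_prod_range (fun j : ℕ => if j < h then n j else 1) d,
    ← Finset.prod_filter]
  congr 1
  ext j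
  simp only [Finset.mem_filter, Finset.mem_range]
  omega

lemma sum_k (n : ℕ → ℕ) (h : ℕ) (hn : ∀ i < h, 1 ≤ n i) :
    ∑ j ∈ Finset.range (h + 1), k n j = ∏ j ∈ Finset.range h, n j := by
  induction h with
  | zero => simp [k]
  | succ h ih =>
    rw [Finset.sum_range_succ, ih fun i hi => hn i (by omega), Finset.prod_range_succ]
    obtain ⟨m, hm⟩ := Nat.exists_eq_add_of_le (hn h (by omega))
    simp [k, hm]
    ring

lemma S_apply {d : ℕ} {n : ℕ → ℕ} (x₀ : Vx d n) (i h : ℕ) (y z : Vx d n) :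
    (∑ j ∈ Finset.range (h + 1), Es x₀ i * A d n j * Es x₀ i) y z =
      if delta x₀ y = i ∧ delta x₀ z = i ∧ delta y z ≤ h then 1 else 0 := by
  have hE : Es x₀ i = Matrix.diagonal fun y => if delta x₀ y = i then (1 : ℂ) else 0 := by
    ext y z
    by_cases hyz : y = z
    · subst hyz; simp [Es]
    · simp [Es, hyz]
  rw [hE, Matrix.sum_apply]
  simp only [Matrix.mul_diagonal, Matrix.diagonal_mul, A, Matrix.of_apply]
  rw [← Finset.sum_mul, ← Finset.mul_sum, Finset.sum_ite_eq]
  simp only [Finset.mem_range, Nat.lt_succ_iff]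
  split_ifs <;> simp_all

/-- for `1 ≤ i ≤ d` and `h ≤ i - 1`,
`(Σ_{j=0}^h E_i* A_j E_i*)² = (Σ_{j=0}^h k j) (Σ_{j=0}^h E_i* A_j E_i*)`. -/
theorem stmt19 (d : ℕ) (hd : 1 ≤ d) (n : ℕ → ℕ) (hn : ∀ i < d, 2 ≤ n i)
    (x₀ : Vx d n) (i h : ℕ) (h1 : 1 ≤ i) (hi : i ≤ d) (hh : h ≤ i - 1) :
    (∑ j ∈ Finset.range (h + 1), Es x₀ i * A d n j * Es x₀ i) *
        (∑ j ∈ Finset.range (h + 1), Es x₀ i * A d n j * Es x₀ i)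
      = (∑ j ∈ Finset.range (h + 1), (k n j : ℂ)) •
          (∑ j ∈ Finset.range (h + 1), Es x₀ i * A d n j * Es x₀ i) := by
  have hi' : h < i := by omega
  have hS : (∑ j ∈ Finset.range (h + 1), (k n j : ℂ)) = ((∏ j ∈ Finset.range h, n j : ℕ) : ℂ) := by
    rw [← sum_k n h fun i hi => by have := hn i (by omega); omega]
    push_cast
    rfl
  rw [hS]
  ext y z
  rw [Matrix.mul_apply, Matrix.smul_apply]
  simp only [S_apply]
  by_cases hc : delta x₀ y = i ∧ delta x₀ z = i ∧ delta y z ≤ h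
  · rw [if_pos hc, ← card_ball y h (by omega)]
    obtain ⟨c1, c2, c3⟩ := hc
    rw [smul_eq_mul, mul_one, Finset.card_filter]
    push_cast
    refine Finset.sum_congr rfl fun w _ => ?_
    by_cases hw : delta y w ≤ h
    · have c4 := delta_eq_of c1 hw hi'
      have c5 : delta w z ≤ h := delta_tri (by rw [delta_symm]; exact hw) c3
      simp [c1, c2, c4, c5, hw]
    · simp [hw]
  · rw [if_neg hc, smul_zero]
    refine Finset.sum_eq_zero fun w _ => ?_
    by_cases h3 : delta x₀ y = i ∧ delta x₀ w = i ∧ delta y w ≤ h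
    · by_cases h4 : delta x₀ w = i ∧ delta x₀ z = i ∧ delta w z ≤ h
      · exact absurd ⟨h3.1, h4.2.1, delta_tri h3.2.2 h4.2.2⟩ hc
      · rw [if_neg h4, mul_zero]
    · rw [if_neg h3, zero_mul]
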